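/- For every integer n ≥ 0, the number of Dyck paths of semi-length n in which no two peaks have the same height is odd. -/

import Mathlib

/-- The step associated to a letter: `true` is an up step `+1`, `false` a down step `-1`. -/
def stepVal (b : Bool) : ℤ := if b then 1 else -1

/-- Partial sum `S_i`: the sum of the first `i` steps of the word `w`. -/
def psum {L : ℕ} (w : Fin L → Bool) (i : ℕ) : ℤ :=
  ∑ j : Fin L, if (j : ℕ) < i then stepVal (w j) else 0

/-- A Dyck bridge: a `±1` word whose total sum is `0`. -/
def IsBridge {L : ℕ} (w : Fin L → Bool) : Prop := psum w L = 0

/-- A Dyck path: a bridge all of whose partial sums are nonnegative. -/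
def IsDyck {L : ℕ} (w : Fin L → Bool) : Prop :=
  IsBridge w ∧ ∀ i : ℕ, 0 ≤ psum w i

/-- A peak at (0-based) position `i`: step `i` is up and step `i+1` is down. -/
def IsPeak {L : ℕ} (w : Fin L → Bool) (i : ℕ) : Prop :=
  ∃ j k : Fin L, (j : ℕ) = i ∧ (k : ℕ) = i + 1 ∧ w j = true ∧ w k = false

/-- The height of the peak at (0-based) position `i`, i.e. the altitude
reached by its up step. -/
def peakHeight {L : ℕ} (w : Fin L → Bool) (i : ℕ) : ℤ := psum w (i + 1)

/-- A crossing of the x-axis at (1-based) index `i`: `0 < i < L`, `S_i = 0`,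
and the steps `w_i`, `w_{i+1}` (1-based) are equal. -/
def IsCrossing {L : ℕ} (w : Fin L → Bool) (i : ℕ) : Prop :=
  0 < i ∧ i < L ∧ psum w i = 0 ∧
    ∃ j k : Fin L, (j : ℕ) + 1 = i ∧ (k : ℕ) = i ∧ w j = w k

/-!
Reading a Dyck path backwards is an involution that preserves the heights of peaks. A path fixed by
it carries its peaks in pairs of equal height, placed symmetrically about the midpoint. If in
addition the peak heights are distinct, there can be no peak but the one at the midpoint, so the
path is `n` up steps followed by `n` down steps. The involution thus has a single fixed point.
-/

/-- The mirror image of a lattice path in a vertical line: the word is read backwards and its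
steps are negated. -/
def mirror {L : ℕ} (w : Fin L → Bool) : Fin L → Bool := fun j => !w j.rev

/-- The path `Uⁿ Dⁿ`, whose only peak (for `n ≠ 0`) is at the midpoint. -/
def pyramid (n : ℕ) : Fin (2 * n) → Bool := fun j => decide ((j : ℕ) < n)

/-- No two peaks of the path have the same height. -/
def HasDistinctPeakHeights {L : ℕ} (w : Fin L → Bool) : Prop :=
  ∀ i j : ℕ, IsPeak w i → IsPeak w j → i ≠ j → peakHeight w i ≠ peakHeight w j

theorem odd_natCard_of_involutive {α : Type*} [Finite α] {f : α → α}
    (hf : Function.Involutive f) (hfix : ∃! a, Function.IsFixedPt f a) : Odd (Nat.card α) := by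
  classical
  have := Fintype.ofFinite α
  obtain ⟨a, ha, huniq⟩ := hfix
  have card_fixedPoints : Fintype.card (Function.fixedPoints f) = 1 :=
    Fintype.card_eq_one_iff.mpr ⟨⟨a, ha⟩, fun b => Subtype.ext (huniq b b.2)⟩
  have card_modEq := Equiv.Perm.card_fixedPoints_modEq (p := 2) (n := 1) (f := f) (funext hf)
  rw [card_fixedPoints] at card_modEq
  rw [Nat.card_eq_fintype_card, Nat.odd_iff]
  exact card_modEq

section Path

variable {L : ℕ} {w : Fin L → Bool}

theorem psum_zero (w : Fin L → Bool) : psum w 0 = 0 := by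
  simp [psum]

theorem psum_succ (w : Fin L → Bool) (i : Fin L) :
    psum w (i + 1) = psum w i + stepVal (w i) := by
  have split_term (j : Fin L) : (if (j : ℕ) < i + 1 then stepVal (w j) else 0) =
      (if (j : ℕ) < i then stepVal (w j) else 0) + if j = i then stepVal (w j) else 0 := by
    grind
  simp only [psum, split_term, Finset.sum_add_distrib, Finset.sum_ite_eq', Finset.mem_univ, if_true]

theorem psum_eq_of_forall_eq_true {i : ℕ} (hi : i ≤ L)
    (hup : ∀ j : Fin L, (j : ℕ) < i → w j = true) : psum w i = i := by
  induction i with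
  | zero => exact psum_zero w
  | succ i ih =>
    rw [psum_succ w ⟨i, hi⟩, ih (by omega) fun j hj => hup j (by omega),
      hup ⟨i, hi⟩ (Nat.lt_succ_self i)]
    simp [stepVal]

theorem eq_true_of_psum_one_nonneg (h : 0 ≤ psum w 1) {k : Fin L} (hk : (k : ℕ) = 0) :
    w k = true := by
  by_contra hdown
  have hstep := psum_succ w k
  rw [hk, zero_add, psum_zero] at hstep
  simp [hstep, stepVal, hdown] at h

theorem eq_true_of_forall_not_isPeak (h : 0 ≤ psum w 1) {m : ℕ}
    (hpeak : ∀ i, i + 1 < m → ¬ IsPeak w i) {k : Fin L} (hk : (k : ℕ) < m) : w k = true := by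
  obtain ⟨k, hkL⟩ := k
  induction k with
  | zero => exact eq_true_of_psum_one_nonneg h rfl
  | succ k ih =>
    have hprev : w ⟨k, by omega⟩ = true := ih _ (Nat.lt_of_succ_lt hk)
    by_contra hdown
    exact hpeak k hk ⟨_, _, rfl, rfl, hprev, Bool.eq_false_of_not_eq_true hdown⟩

theorem IsPeak.exists_add_add_two_eq {i : ℕ} (h : IsPeak w i) : ∃ j, i + j + 2 = L := by
  obtain ⟨_, k, _, hk, _⟩ := h
  exact ⟨L - (i + 2), by omega⟩

theorem mirror_involutive : Function.Involutive (mirror (L := L)) := fun w => by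
  funext j
  simp [mirror]

/-- Truncated subtraction is harmless here: for `L < i` both sides are `-psum w L`. -/
theorem psum_mirror (w : Fin L → Bool) (i : ℕ) :
    psum (mirror w) i = psum w (L - i) - psum w L := by
  simp only [psum]
  rw [← Equiv.sum_comp Fin.revPerm, ← Finset.sum_sub_distrib]
  refine Finset.sum_congr rfl fun j _ => ?_
  have rev_lt_iff : (j.rev : ℕ) < i ↔ ¬ (j : ℕ) < L - i := by
    rw [Fin.val_rev]
    omega
  have stepVal_not : stepVal (!w j) = -stepVal (w j) := by
    cases w j <;> rfl
  simp only [Fin.revPerm_apply, mirror, Fin.rev_rev, rev_lt_iff, stepVal_not, j.isLt, if_true]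
  split_ifs <;> simp

theorem isDyck_mirror (h : IsDyck w) : IsDyck (mirror w) := by
  obtain ⟨hbridge, hnonneg⟩ := h
  have psum_mirror_eq (i : ℕ) : psum (mirror w) i = psum w (L - i) := by
    rw [psum_mirror, show psum w L = 0 from hbridge, sub_zero]
  refine ⟨?_, fun i => ?_⟩
  · rw [IsBridge, psum_mirror_eq, Nat.sub_self, psum_zero]
  · rw [psum_mirror_eq]
    exact hnonneg _

theorem IsPeak.of_mirror {i j : ℕ} (hij : i + j + 2 = L) (h : IsPeak (mirror w) i) :
    IsPeak w j := by
  obtain ⟨a, b, ha, hb, hup, hdown⟩ := h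
  refine ⟨b.rev, a.rev, ?_, ?_, ?_, ?_⟩
  · rw [Fin.val_rev]
    omega
  · rw [Fin.val_rev]
    omega
  · simpa [mirror] using hdown
  · simpa [mirror] using hup

theorem peakHeight_mirror {i j : ℕ} (hij : i + j + 2 = L) :
    peakHeight (mirror w) i = peakHeight w j - psum w L := by
  rw [peakHeight, psum_mirror, peakHeight, show L - (i + 1) = j + 1 by omega]

theorem hasDistinctPeakHeights_mirror (h : HasDistinctPeakHeights w) :
    HasDistinctPeakHeights (mirror w) := by
  intro i j hi hj hij
  obtain ⟨i', hi'⟩ := hi.exists_add_add_two_eq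
  obtain ⟨j', hj'⟩ := hj.exists_add_add_two_eq
  rw [peakHeight_mirror hi', peakHeight_mirror hj', Ne, sub_left_inj]
  exact h i' j' (hi.of_mirror hi') (hj.of_mirror hj') (by omega)

theorem isBridge_of_mirror_eq (hw : mirror w = w) : IsBridge w := by
  have hsum := psum_mirror w L
  rw [hw, Nat.sub_self, psum_zero] at hsum
  rw [IsBridge]
  omega

theorem psum_sub_of_mirror_eq (hw : mirror w = w) (i : ℕ) : psum w (L - i) = psum w i := by
  have hbridge : psum w L = 0 := isBridge_of_mirror_eq hw
  simpa [hw, hbridge] using (psum_mirror w i).symm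

theorem IsPeak.two_mul_add_two_eq_of_mirror_eq {i : ℕ} (hi : IsPeak w i) (hw : mirror w = w)
    (hdist : HasDistinctPeakHeights w) : 2 * i + 2 = L := by
  obtain ⟨j, hij⟩ := hi.exists_add_add_two_eq
  have hj : IsPeak w j := IsPeak.of_mirror hij (hw.symm ▸ hi)
  have hbridge : psum w L = 0 := isBridge_of_mirror_eq hw
  have hheight : peakHeight w i = peakHeight w j := by
    simpa [hw, hbridge] using peakHeight_mirror (w := w) hij
  have heq : i = j := by_contra fun hne => hdist i j hi hj hne hheight
  omega

end Path

theorem mirror_pyramid (n : ℕ) : mirror (pyramid n) = pyramid n := by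
  funext j
  simp only [mirror, pyramid, Fin.val_rev, ← decide_not, decide_eq_decide]
  omega

theorem isDyck_pyramid (n : ℕ) : IsDyck (pyramid n) := by
  have nonneg_of_le {i : ℕ} (hi : i ≤ n) : 0 ≤ psum (pyramid n) i := by
    have up_of_lt (j : Fin (2 * n)) (hj : (j : ℕ) < i) : pyramid n j = true :=
      decide_eq_true (hj.trans_le hi)
    rw [psum_eq_of_forall_eq_true (by omega) up_of_lt]
    exact Int.natCast_nonneg i
  refine ⟨isBridge_of_mirror_eq (mirror_pyramid n), fun i => ?_⟩
  rcases le_total i n with hi | hi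
  · exact nonneg_of_le hi
  · rw [← psum_sub_of_mirror_eq (mirror_pyramid n)]
    exact nonneg_of_le (by omega)

theorem add_one_eq_of_isPeak_pyramid {n i : ℕ} (h : IsPeak (pyramid n) i) : i + 1 = n := by
  obtain ⟨a, b, ha, hb, hup, hdown⟩ := h
  simp only [pyramid, decide_eq_true_eq, decide_eq_false_iff_not] at hup hdown
  omega

theorem hasDistinctPeakHeights_pyramid (n : ℕ) : HasDistinctPeakHeights (pyramid n) := by
  intro i j hi hj hij
  have := add_one_eq_of_isPeak_pyramid hi
  have := add_one_eq_of_isPeak_pyramid hj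
  omega

theorem eq_pyramid_of_mirror_eq {n : ℕ} {w : Fin (2 * n) → Bool} (hw : mirror w = w)
    (hpos : 0 ≤ psum w 1) (hdist : HasDistinctPeakHeights w) : w = pyramid n := by
  have up_of_lt {j : Fin (2 * n)} (hj : (j : ℕ) < n) : w j = true := by
    refine eq_true_of_forall_not_isPeak hpos (fun i hi hpeak => ?_) hj
    have := hpeak.two_mul_add_two_eq_of_mirror_eq hw hdist
    omega
  funext j
  by_cases hj : (j : ℕ) < n
  · rw [up_of_lt hj, pyramid, decide_eq_true hj]
  · have hrev : w j.rev = true := up_of_lt (by rw [Fin.val_rev]; omega)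
    rw [← hw, mirror, hrev, pyramid, decide_eq_false hj, Bool.not_true]

/-- For every integer `n ≥ 0`, the number of Dyck paths of
semi-length `n` in which no two peaks have the same height is odd. -/
theorem stmt_10 (n : ℕ) :
    Odd (Nat.card {w : Fin (2 * n) → Bool // IsDyck w ∧
      ∀ i j : ℕ, IsPeak w i → IsPeak w j → i ≠ j →
        peakHeight w i ≠ peakHeight w j}) := by
  let reflect : {w : Fin (2 * n) → Bool // IsDyck w ∧ HasDistinctPeakHeights w} →
      {w : Fin (2 * n) → Bool // IsDyck w ∧ HasDistinctPeakHeights w} :=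
    Subtype.map mirror fun _ hw => ⟨isDyck_mirror hw.1, hasDistinctPeakHeights_mirror hw.2⟩
  have reflect_involutive : Function.Involutive reflect :=
    fun w => Subtype.ext (mirror_involutive w.1)
  refine odd_natCard_of_involutive reflect_involutive
    ⟨⟨pyramid n, isDyck_pyramid n, hasDistinctPeakHeights_pyramid n⟩,
      Subtype.ext (mirror_pyramid n), ?_⟩
  rintro ⟨w, hdyck, hdist⟩ hfix
  exact Subtype.ext (eq_pyramid_of_mirror_eq (congrArg Subtype.val hfix) (hdyck.2 1) hdist)
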